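/- Let m ≥ 3 be odd and λ = (m−2)/2. Define A_{1/2}(w,z) = (π/(2z))^{1/2} (1/2) Σ_{k≥0} (−i + (−1)^k) J_{k+1/2}(z) C_k^{1/2}(w) and B_{1/2}(w,z) = (π/(2z))^{1/2} Σ_{k≥0} (k+1/2)(i + (−1)^k) J_{k+1/2}(z) C_k^{1/2}(w). Then the functions A_λ, B_λ, C_λ of the series representation of the Clifford–Fourier kernel are obtained from these by differentiation: A_{(m−2)/2}(w,z) = (−1)^{(m−3)/2} (m−2) z^{(3−m)/2} ∂_w^{(m−3)/2} A_{1/2}(w,z); B_{(m−2)/2}(w,z) = (−1)^{(m−3)/2} z^{(3−m)/2} ∂_w^{(m−3)/2} B_{1/2}(w,z); C_{(m−2)/2}(w,z) = 2 (−1)^{(m−1)/2} z^{(1−m)/2} ∂_w^{(m−1)/2} A_{1/2}(w,z). Hence K_−(x,y) = A_{(m−2)/2}(w,z) + B_{(m−2)/2}(w,z) + (x∧y) C_{(m−2)/2}(w,z) is determined by A_{1/2} and B_{1/2}. -/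

import Mathlib

open scoped BigOperators
open MeasureTheory

noncomputable section

namespace CliffordFourier

/-- The Gegenbauer polynomial `C_k^λ(w)`, defined through the standard three-term
recurrence, equivalent to the generating function `(1-2wt+t²)^{-λ} = Σ_k C_k^λ(w) t^k`. -/
def geg (lam : ℝ) : ℕ → ℝ → ℝ
  | 0, _ => 1
  | 1, w => 2 * lam * w
  | (k+2), w => (2 * ((k : ℝ) + 1 + lam) * w * geg lam (k+1) w
      - ((k : ℝ) + 2 * lam) * geg lam k w) / ((k : ℝ) + 2)

/-- The Bessel function of the first kind
`J_a(z) = Σ_{j≥0} (-1)^j (z/2)^{2j+a} / (j! Γ(j+a+1))`. -/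
def besselJ (a z : ℝ) : ℝ :=
  ∑' j : ℕ, ((-1 : ℝ)^j * (z/2) ^ (2*(j:ℝ) + a)) / (j.factorial * Real.Gamma ((j : ℝ) + a + 1))

/-- `A_λ(w,z) = 2^{λ-1} Γ(λ+1) Σ_{k≥0} (u + (-1)^k) z^{-λ} J_{k+λ}(z) C_k^λ(w)`,
where `u` stands for `i^m`. -/
def AfunU (u : ℂ) (lam w z : ℝ) : ℂ :=
  (((2:ℝ)^(lam - 1) * Real.Gamma (lam + 1) : ℝ) : ℂ) *
    ∑' k : ℕ, (u + (-1 : ℂ)^k) * ((z ^ (-lam) * besselJ ((k : ℝ) + lam) z * geg lam k w : ℝ) : ℂ)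

/-- `B_λ(w,z) = -2^{λ-1} Γ(λ) Σ_{k≥0} (k+λ)(u - (-1)^k) z^{-λ} J_{k+λ}(z) C_k^λ(w)`. -/
def BfunU (u : ℂ) (lam w z : ℝ) : ℂ :=
  -(((2:ℝ)^(lam - 1) * Real.Gamma lam : ℝ) : ℂ) *
    ∑' k : ℕ, ((k : ℂ) + (lam : ℂ)) * (u - (-1 : ℂ)^k) *
      ((z ^ (-lam) * besselJ ((k : ℝ) + lam) z * geg lam k w : ℝ) : ℂ)

/-- `C_λ(w,z) = -2^{λ-1} Γ(λ) Σ_{k≥0} (u + (-1)^k) z^{-λ-1} J_{k+λ}(z) (C_k^λ)'(w)`. -/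
def CfunU (u : ℂ) (lam w z : ℝ) : ℂ :=
  -(((2:ℝ)^(lam - 1) * Real.Gamma lam : ℝ) : ℂ) *
    ∑' k : ℕ, (u + (-1 : ℂ)^k) *
      ((z ^ (-lam - 1) * besselJ ((k : ℝ) + lam) z * deriv (geg lam k) w : ℝ) : ℂ)

/-- `A_{1/2}(w,z) = (π/(2z))^{1/2} (1/2) Σ_{k≥0} (-i + (-1)^k) J_{k+1/2}(z) C_k^{1/2}(w)`. -/
def A12 (w z : ℝ) : ℂ :=
  ((Real.sqrt (Real.pi/(2*z)) : ℝ) : ℂ) * (1/2 : ℂ) *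
    ∑' k : ℕ, (-Complex.I + (-1 : ℂ)^k) * ((besselJ ((k:ℝ) + 1/2) z * geg (1/2) k w : ℝ) : ℂ)

/-- `B_{1/2}(w,z) = (π/(2z))^{1/2} Σ_{k≥0} (k+1/2)(i + (-1)^k) J_{k+1/2}(z) C_k^{1/2}(w)`. -/
def B12 (w z : ℝ) : ℂ :=
  ((Real.sqrt (Real.pi/(2*z)) : ℝ) : ℂ) *
    ∑' k : ℕ, ((k : ℂ) + 1/2) * (Complex.I + (-1 : ℂ)^k) *
      ((besselJ ((k:ℝ) + 1/2) z * geg (1/2) k w : ℝ) : ℂ)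

/-!
All three families are instances of one series
`S_λ(a) = 2^{λ-1} Γ(λ) z^{-λ} Σ_k a_k J_{k+λ}(z) C_k^λ(w)`, and the Gegenbauer relation
`(C_{k+1}^λ)' = 2λ C_k^{λ+1}` gives `∂_w S_λ(a) = z S_{λ+1}(k ↦ a_{k+1})`: the index shift of the
Bessel functions is absorbed by the change of `λ`, because `J_{k+1+λ} = J_{k+(λ+1)}`.
Shifting `u ± (-1)^k` turns `u` into `-u` up to sign, which is how `i^m` changes when `m`
increases by two. Since `A_{1/2}`, `B_{1/2}` are the `u = -i = i³` members of their families and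
`C_λ` with parameter `u` is `A_{λ+1} / (λ+1)` with parameter `-u`, iterating from `λ = 1/2` gives
all three formulas. The factorial decay of `J_{k+λ}(z)` in `k` justifies termwise differentiation
at every real `w`.
-/

open Filter Asymptotics
open scoped Nat

/-! ### Gegenbauer polynomials -/

lemma geg_zero (l w : ℝ) : geg l 0 w = 1 := by rw [geg]

lemma geg_one (l w : ℝ) : geg l 1 w = 2 * l * w := by rw [geg]

lemma geg_add_two (l w : ℝ) (k : ℕ) :
    (k + 2) * geg l (k + 2) w
      = 2 * (k + 1 + l) * w * geg l (k + 1) w - (k + 2 * l) * geg l k w := by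
  rw [geg]
  field_simp

-- The coefficient of `t^{k+2}` in `(1-2wt+t²)^{-λ} = (1-2wt+t²) (1-2wt+t²)^{-λ-1}`.
lemma geg_add_two_eq_sub_add (l w : ℝ) (k : ℕ) :
    geg l (k + 2) w
      = geg (l + 1) (k + 2) w - 2 * w * geg (l + 1) (k + 1) w + geg (l + 1) k w := by
  induction k using Nat.twoStepInduction with
  | zero =>
    have h := geg_add_two l w 0
    have g := geg_add_two (l + 1) w 0
    simp only [geg_zero, geg_one, zero_add, Nat.cast_zero] at h g ⊢
    linear_combination (h - g) / 2
  | one =>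
    have h₀ := geg_add_two l w 0
    have h₁ := geg_add_two l w 1
    have g₀ := geg_add_two (l + 1) w 0
    have g₁ := geg_add_two (l + 1) w 1
    simp only [geg_zero, geg_one, zero_add, Nat.cast_zero, Nat.cast_one, Nat.reduceAdd]
      at h₀ h₁ g₀ g₁ ⊢
    linear_combination (h₁ + (2 + l) * w * h₀ - l * w * g₀ - g₁) / 3
  | more k ih₀ ih₁ =>
    have h := geg_add_two l w (k + 2)
    have g₀ := geg_add_two (l + 1) w k
    have g₁ := geg_add_two (l + 1) w (k + 1)
    have g₂ := geg_add_two (l + 1) w (k + 2)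
    refine mul_left_cancel₀ (show (k + 4 : ℝ) ≠ 0 by positivity) ?_
    push_cast at h g₁ g₂ ⊢
    linear_combination
      h + 2 * (k + 3 + l) * w * ih₁ - (k + 2 + 2 * l) * ih₀ - g₀ + 2 * w * g₁ - g₂

lemma add_mul_geg_add_two (l w : ℝ) (k : ℕ) :
    (k + 2 + l) * geg l (k + 2) w = l * (geg (l + 1) (k + 2) w - geg (l + 1) k w) := by
  linear_combination (k + 2 + l) * geg_add_two_eq_sub_add l w k + geg_add_two (l + 1) w k

lemma hasDerivAt_geg_zero (l w : ℝ) : HasDerivAt (geg l 0) 0 w := by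
  rw [funext (geg_zero l)]
  exact hasDerivAt_const w 1

lemma hasDerivAt_geg_add_two {l w d₀ d₁ : ℝ} {k : ℕ} (h₀ : HasDerivAt (geg l k) d₀ w)
    (h₁ : HasDerivAt (geg l (k + 1)) d₁ w) :
    HasDerivAt (geg l (k + 2))
      ((2 * (k + 1 + l) * (geg l (k + 1) w + w * d₁) - (k + 2 * l) * d₀) / (k + 2)) w := by
  have h : geg l (k + 2) = fun y ↦
      (2 * (k + 1 + l) * y * geg l (k + 1) y - (k + 2 * l) * geg l k y) / (k + 2) := by
    funext y
    rw [geg]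
  rw [h]
  have hlin : HasDerivAt (fun y ↦ 2 * (k + 1 + l) * y) (2 * (k + 1 + l)) w := by
    simpa using (hasDerivAt_id w).const_mul (2 * (k + 1 + l))
  refine (((hlin.mul h₁).sub (h₀.const_mul (k + 2 * l))).div_const (k + 2)).congr_deriv ?_
  ring

lemma hasDerivAt_geg_succ (l w : ℝ) (k : ℕ) :
    HasDerivAt (geg l (k + 1)) (2 * l * geg (l + 1) k w) w := by
  have h_one : HasDerivAt (geg l 1) (2 * l) w := by
    rw [funext (geg_one l)]
    simpa using (hasDerivAt_id w).const_mul (2 * l)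
  induction k using Nat.twoStepInduction with
  | zero => simpa [geg_zero] using h_one
  | one =>
    refine (hasDerivAt_geg_add_two (hasDerivAt_geg_zero l w) h_one).congr_deriv ?_
    simp only [geg_one, Nat.cast_zero, zero_add]
    ring
  | more k ih₀ ih₁ =>
    refine (hasDerivAt_geg_add_two ih₀ ih₁).congr_deriv ?_
    rw [div_eq_iff (by positivity)]
    push_cast
    linear_combination 2 * add_mul_geg_add_two l w k - 2 * l * geg_add_two (l + 1) w k

lemma abs_geg_le {w R : ℝ} (hw : |w| ≤ R) (l : ℝ) (k : ℕ) :
    |geg l k w| ≤ (2 * (1 + |l|) * (1 + R)) ^ k := by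
  have hl : 0 ≤ |l| := abs_nonneg l
  have hR : 0 ≤ R := (abs_nonneg w).trans hw
  have one_le : 1 ≤ 2 * (1 + |l|) * (1 + R) := by nlinarith
  induction k using Nat.twoStepInduction with
  | zero => simp [geg_zero]
  | one =>
    rw [geg_one, abs_mul, abs_mul, abs_two, pow_one]
    gcongr <;> linarith
  | more k ih₀ ih₁ =>
    set M := 2 * (1 + |l|) * (1 + R) with hM
    have h_succ :
        |2 * (k + 1 + l) * w * geg l (k + 1) w| ≤ 2 * (k + 1 + |l|) * R * M ^ (k + 1) := by
      have : |(k + 1 + l : ℝ)| ≤ k + 1 + |l| :=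
        (abs_add_le _ _).trans_eq (by rw [abs_of_nonneg (by positivity)])
      rw [abs_mul, abs_mul, abs_mul, abs_two]
      gcongr
    have h_self : |(k + 2 * l) * geg l k w| ≤ (k + 2 * |l|) * M ^ (k + 1) := by
      have : |(k + 2 * l : ℝ)| ≤ k + 2 * |l| :=
        (abs_add_le _ _).trans_eq (by rw [abs_mul, abs_two, Nat.abs_cast])
      rw [abs_mul]
      gcongr
      exact ih₀.trans (pow_le_pow_right₀ one_le k.le_succ)
    have h_coeff : 2 * (k + 1 + |l|) * R + (k + 2 * |l|) ≤ M * (k + 2) := by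
      have : 0 ≤ (k : ℝ) * |l| * (1 + R) := by positivity
      rw [hM]
      nlinarith
    rw [geg, abs_div, abs_of_pos (by positivity : (0 : ℝ) < k + 2), div_le_iff₀ (by positivity)]
    calc |2 * (k + 1 + l) * w * geg l (k + 1) w - (k + 2 * l) * geg l k w|
        ≤ 2 * (k + 1 + |l|) * R * M ^ (k + 1) + (k + 2 * |l|) * M ^ (k + 1) :=
          (abs_sub _ _).trans (add_le_add h_succ h_self)
      _ = M ^ (k + 1) * (2 * (k + 1 + |l|) * R + (k + 2 * |l|)) := by ring
      _ ≤ M ^ (k + 1) * (M * (k + 2)) := by gcongr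
      _ = M ^ (k + 2) * (k + 2) := by ring

/-! ### Gegenbauer series -/

section GegenbauerSeries

variable {E : Type*} [NormedAddCommGroup E]

/-- The sequence `c` consists of the Taylor coefficients of an entire function. Gegenbauer series
with such coefficients converge on the whole real line, because `C_k^λ(w)` grows at most
geometrically in `k`. -/
def IsEntireCoeff (c : ℕ → E) : Prop :=
  ∀ q : ℝ, Summable fun k ↦ q ^ k * ‖c k‖

lemma IsEntireCoeff.comp_succ {c : ℕ → E} (hc : IsEntireCoeff c) :
    IsEntireCoeff fun k ↦ c (k + 1) := by
  intro q
  rcases eq_or_ne q 0 with rfl | hq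
  · exact summable_of_ne_finset_zero (s := {0}) fun k hk ↦ by simp_all
  · refine (((summable_nat_add_iff 1).2 (hc q)).mul_left q⁻¹).congr fun k ↦ ?_
    rw [pow_succ]
    field_simp

variable [NormedSpace ℝ E]

/-- The Gegenbauer series `Σ_k C_k^λ(w) c_k`, with coefficients in a real normed space. -/
def gegSeries (l : ℝ) (c : ℕ → E) (w : ℝ) : E :=
  ∑' k, geg l k w • c k

lemma norm_geg_smul_le {w R : ℝ} (hw : |w| ≤ R) (l : ℝ) (k : ℕ) (x : E) :
    ‖geg l k w • x‖ ≤ (2 * (1 + |l|) * (1 + R)) ^ k * ‖x‖ := by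
  rw [norm_smul, Real.norm_eq_abs]
  gcongr
  exact abs_geg_le hw l k

variable [CompleteSpace E]

lemma IsEntireCoeff.summable_geg_smul {c : ℕ → E} (hc : IsEntireCoeff c) (l w : ℝ) :
    Summable fun k ↦ geg l k w • c k :=
  .of_norm_bounded (hc _) fun k ↦ norm_geg_smul_le le_rfl l k (c k)

lemma tsum_deriv_geg_smul {c : ℕ → E} (hc : IsEntireCoeff c) (l w : ℝ) :
    ∑' k, deriv (geg l k) w • c k = (2 * l) • gegSeries (l + 1) (fun k ↦ c (k + 1)) w := by
  have hsum := (hc.comp_succ.summable_geg_smul (l + 1) w).const_smul (2 * l)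
  rw [tsum_eq_zero_add' (by simpa only [(hasDerivAt_geg_succ l w _).deriv, mul_smul] using hsum),
    (hasDerivAt_geg_zero l w).deriv, zero_smul, zero_add, gegSeries, ← tsum_const_smul'']
  simp only [(hasDerivAt_geg_succ l w _).deriv, mul_smul]

lemma hasDerivAt_gegSeries {c : ℕ → E} (hc : IsEntireCoeff c) (l w : ℝ) :
    HasDerivAt (gegSeries l c) ((2 * l) • gegSeries (l + 1) (fun k ↦ c (k + 1)) w) w := by
  have hsplit : gegSeries l c = fun y ↦ c 0 + ∑' k, geg l (k + 1) y • c (k + 1) := by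
    funext y
    rw [gegSeries, (hc.summable_geg_smul l y).tsum_eq_zero_add, geg_zero, one_smul]
  have hw : w ∈ Metric.ball (0 : ℝ) (|w| + 1) := by simp
  have hterm : ∀ k, ∀ y ∈ Metric.ball (0 : ℝ) (|w| + 1),
      HasDerivAt (fun y ↦ geg l (k + 1) y • c (k + 1))
        ((2 * l) • geg (l + 1) k y • c (k + 1)) y := fun k y _ ↦ by
    simpa only [mul_smul] using (hasDerivAt_geg_succ l y k).smul_const (c (k + 1))
  have hbound : ∀ k, ∀ y ∈ Metric.ball (0 : ℝ) (|w| + 1),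
      ‖(2 * l) • geg (l + 1) k y • c (k + 1)‖
        ≤ ‖2 * l‖ * ((2 * (1 + |l + 1|) * (1 + (|w| + 1))) ^ k * ‖c (k + 1)‖) := fun k y hy ↦ by
    rw [norm_smul]
    gcongr
    exact norm_geg_smul_le (mem_ball_zero_iff.1 hy).le (l + 1) k (c (k + 1))
  rw [hsplit, gegSeries, ← tsum_const_smul'']
  exact (hasDerivAt_tsum_of_isPreconnected ((hc.comp_succ _).mul_left _) Metric.isOpen_ball
    (convex_ball _ _).isPreconnected hterm hbound hw
    ((summable_nat_add_iff 1).2 (hc.summable_geg_smul l w)) hw).const_add (c 0)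

end GegenbauerSeries

/-! ### Decay of Bessel functions in the order -/

lemma factorial_mul_Gamma_le {a : ℝ} (ha : 0 ≤ a) (k : ℕ) :
    k ! * Real.Gamma (a + 1) ≤ Real.Gamma (k + a + 1) := by
  induction k with
  | zero => simp
  | succ k ih =>
    calc ((k + 1)! : ℝ) * Real.Gamma (a + 1)
        = (k + 1) * (k ! * Real.Gamma (a + 1)) := by
          rw [Nat.factorial_succ]
          push_cast
          ring
      _ ≤ (k + a + 1) * Real.Gamma (k + a + 1) := by
          gcongr
          linarith
      _ = Real.Gamma ((k + 1 : ℕ) + a + 1) := by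
          rw [← Real.Gamma_add_one (by positivity)]
          push_cast
          ring_nf

lemma abs_besselJ_le {a z : ℝ} (ha : 0 ≤ a) (hz : 0 ≤ z) :
    |besselJ a z| ≤ (z / 2) ^ a / Real.Gamma (a + 1) * Real.exp ((z / 2) ^ 2) := by
  have hΓ : 0 < Real.Gamma (a + 1) := Real.Gamma_pos_of_pos (by positivity)
  have hexp : HasSum (fun j : ℕ ↦ (z / 2) ^ a / Real.Gamma (a + 1) * (((z / 2) ^ 2) ^ j / j !))
      ((z / 2) ^ a / Real.Gamma (a + 1) * Real.exp ((z / 2) ^ 2)) := by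
    rw [Real.exp_eq_exp_ℝ]
    exact HasSum.mul_left _ (NormedSpace.expSeries_div_hasSum_exp _)
  rw [← Real.norm_eq_abs, besselJ]
  refine tsum_of_norm_bounded hexp fun j ↦ ?_
  have hΓ_le : Real.Gamma (a + 1) ≤ Real.Gamma (j + a + 1) :=
    (le_mul_of_one_le_left hΓ.le (mod_cast j.factorial_pos)).trans (factorial_mul_Gamma_le ha j)
  have hpow : (z / 2) ^ (2 * (j : ℝ) + a) = (z / 2) ^ a * ((z / 2) ^ 2) ^ j := by
    rw [Real.rpow_add_of_nonneg (by positivity) (by positivity) ha, mul_comm, ← pow_mul]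
    exact_mod_cast rfl
  calc ‖(-1 : ℝ) ^ j * (z / 2) ^ (2 * (j : ℝ) + a) / (j ! * Real.Gamma (j + a + 1))‖
      = (z / 2) ^ a * ((z / 2) ^ 2) ^ j / (Real.Gamma (j + a + 1) * j !) := by
        have : 0 ≤ Real.Gamma (j + a + 1) := hΓ.le.trans hΓ_le
        rw [norm_div, norm_mul, norm_pow, norm_neg, norm_one, one_pow, one_mul, hpow,
          Real.norm_of_nonneg (by positivity), Real.norm_of_nonneg (by positivity),
          mul_comm (j ! : ℝ)]
    _ ≤ (z / 2) ^ a * ((z / 2) ^ 2) ^ j / (Real.Gamma (a + 1) * j !) := by gcongr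
    _ = (z / 2) ^ a / Real.Gamma (a + 1) * (((z / 2) ^ 2) ^ j / j !) := by
        rw [div_mul_div_comm]

lemma isBigO_besselJ_nat_add {l z : ℝ} (hl : 0 ≤ l) (hz : 0 ≤ z) :
    (fun k : ℕ ↦ besselJ (k + l) z) =O[atTop] fun k ↦ (z / 2) ^ k / (k ! : ℝ) := by
  have : 0 < Real.Gamma (l + 1) := Real.Gamma_pos_of_pos (by positivity)
  refine IsBigO.of_bound ((z / 2) ^ l / Real.Gamma (l + 1) * Real.exp ((z / 2) ^ 2))
    (.of_forall fun k ↦ ?_)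
  calc ‖besselJ (k + l) z‖
      ≤ (z / 2) ^ (k + l) / Real.Gamma (k + l + 1) * Real.exp ((z / 2) ^ 2) :=
        abs_besselJ_le (by positivity) hz
    _ ≤ (z / 2) ^ (k + l) / (k ! * Real.Gamma (l + 1)) * Real.exp ((z / 2) ^ 2) := by
        gcongr
        exact factorial_mul_Gamma_le hl k
    _ = (z / 2) ^ l / Real.Gamma (l + 1) * Real.exp ((z / 2) ^ 2) * ‖(z / 2) ^ k / (k ! : ℝ)‖ := by
        rw [Real.rpow_add_of_nonneg (by positivity) (by positivity) hl, Real.rpow_natCast,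
          Real.norm_of_nonneg (by positivity)]
        field_simp

/-! ### Bessel–Gegenbauer series -/

/-- The sequence `a` grows at most geometrically, so that multiplying it by `J_{k+λ}(z)` gives the
coefficients of an entire function. -/
def HasGeometricGrowth (a : ℕ → ℂ) : Prop :=
  ∃ r : ℝ, a =O[atTop] fun k ↦ r ^ k

namespace HasGeometricGrowth

variable {a b : ℕ → ℂ}

lemma mul (ha : HasGeometricGrowth a) (hb : HasGeometricGrowth b) :
    HasGeometricGrowth fun k ↦ a k * b k := by
  obtain ⟨r, ha⟩ := ha
  obtain ⟨s, hb⟩ := hb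
  exact ⟨r * s, by simpa only [mul_pow] using ha.mul hb⟩

lemma comp_add (ha : HasGeometricGrowth a) (n : ℕ) : HasGeometricGrowth fun k ↦ a (k + n) := by
  obtain ⟨r, ha⟩ := ha
  refine ⟨r, (ha.comp_tendsto (tendsto_add_atTop_nat n)).trans ?_⟩
  simpa only [Function.comp_def, pow_add, mul_comm] using
    (isBigO_refl (fun k : ℕ ↦ r ^ k) atTop).const_mul_left (r ^ n)

lemma isEntireCoeff_mul_besselJ (ha : HasGeometricGrowth a) {l z : ℝ} (hl : 0 ≤ l) (hz : 0 ≤ z) :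
    IsEntireCoeff fun k ↦ a k * (besselJ (k + l) z : ℂ) := by
  obtain ⟨r, ha⟩ := ha
  intro q
  have hJ : (fun k : ℕ ↦ (besselJ (k + l) z : ℂ)) =O[atTop] fun k ↦ (z / 2) ^ k / (k ! : ℝ) :=
    Complex.isBigO_ofReal_left.2 (isBigO_besselJ_nat_add hl hz)
  refine summable_of_isBigO_nat (Real.summable_pow_div_factorial (q * (r * (z / 2)))) ?_
  refine ((isBigO_refl (fun k : ℕ ↦ q ^ k) atTop).mul (ha.mul hJ).norm_left).congr_right fun k ↦ ?_
  rw [mul_pow, mul_pow]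
  ring

end HasGeometricGrowth

lemma hasGeometricGrowth_add_neg_one_pow (u : ℂ) : HasGeometricGrowth fun k ↦ u + (-1) ^ k := by
  refine ⟨1, IsBigO.of_bound (‖u‖ + 1) (.of_forall fun k ↦ ?_)⟩
  simpa using norm_add_le u ((-1) ^ k)

lemma hasGeometricGrowth_natCast_add (c : ℂ) : HasGeometricGrowth fun k ↦ k + c := by
  refine ⟨2, IsBigO.of_bound (1 + ‖c‖) (.of_forall fun k ↦ ?_)⟩
  have hk : (k : ℝ) ≤ 2 ^ k := mod_cast Nat.lt_two_pow_self.le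
  have h1 : (1 : ℝ) ≤ 2 ^ k := one_le_pow₀ one_le_two
  calc ‖(k : ℂ) + c‖ ≤ k + ‖c‖ := by simpa using norm_add_le (k : ℂ) c
    _ ≤ (1 + ‖c‖) * 2 ^ k := by nlinarith [norm_nonneg c]
    _ = (1 + ‖c‖) * ‖(2 : ℝ) ^ k‖ := by simp

/-- The series `2^{λ-1} Γ(λ) z^{-λ} Σ_k a_k J_{k+λ}(z) C_k^λ(w)`, which has `A_λ`, `B_λ` and `C_λ`
as special cases. -/
def besselGegSeries (a : ℕ → ℂ) (l w z : ℝ) : ℂ :=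
  (2 ^ (l - 1) * Real.Gamma l * z ^ (-l) : ℝ) *
    gegSeries l (fun k ↦ a k * (besselJ (k + l) z : ℂ)) w

lemma besselGegSeries_const_mul (s : ℂ) (a : ℕ → ℂ) (l w z : ℝ) :
    besselGegSeries (fun k ↦ s * a k) l w z = s * besselGegSeries a l w z := by
  simp only [besselGegSeries, gegSeries, Complex.real_smul, mul_assoc, mul_left_comm _ s,
    tsum_mul_left]

lemma besselGegSeries_eq_tsum (a : ℕ → ℂ) (l w z : ℝ) :
    besselGegSeries a l w z = (2 ^ (l - 1) * Real.Gamma l : ℝ) *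
      ∑' k : ℕ, a k * ((z ^ (-l) * besselJ (k + l) z * geg l k w : ℝ) : ℂ) := by
  rw [besselGegSeries, gegSeries, Complex.ofReal_mul _ (z ^ (-l)), mul_assoc, ← tsum_mul_left]
  congr 2 with k
  rw [Complex.real_smul]
  push_cast
  ring

lemma two_rpow_mul_Gamma_mul_two_mul {l : ℝ} (hl : l ≠ 0) :
    2 ^ (l - 1) * Real.Gamma l * (2 * l) = 2 ^ (l + 1 - 1) * Real.Gamma (l + 1) := by
  rw [Real.Gamma_add_one hl, add_sub_right_comm, Real.rpow_add_one two_ne_zero]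
  ring

lemma natCast_succ_add (k : ℕ) (l : ℝ) : ((k + 1 : ℕ) : ℝ) + l = k + (l + 1) := by
  push_cast
  ring

section Derivative

variable {a : ℕ → ℂ} {l z : ℝ}

lemma hasDerivAt_besselGegSeries (ha : HasGeometricGrowth a) (hl : 0 < l) (hz : 0 < z) (w : ℝ) :
    HasDerivAt (fun y ↦ besselGegSeries a l y z)
      (z * besselGegSeries (fun k ↦ a (k + 1)) (l + 1) w z) w := by
  have hcoeff : IsEntireCoeff fun k ↦ a k * (besselJ (k + l) z : ℂ) :=
    ha.isEntireCoeff_mul_besselJ hl.le hz.le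
  have hprefactor : 2 ^ (l - 1) * Real.Gamma l * z ^ (-l) * (2 * l)
      = z * (2 ^ (l + 1 - 1) * Real.Gamma (l + 1) * z ^ (-(l + 1))) := by
    rw [← two_rpow_mul_Gamma_mul_two_mul hl.ne', neg_add', Real.rpow_sub_one hz.ne']
    field_simp
  refine ((hasDerivAt_gegSeries hcoeff l w).const_mul _).congr_deriv ?_
  simp only [besselGegSeries, natCast_succ_add, Complex.real_smul, ← mul_assoc,
    ← Complex.ofReal_mul, hprefactor]

lemma iterate_deriv_besselGegSeries (ha : HasGeometricGrowth a) (hl : 0 < l) (hz : 0 < z) (n : ℕ) :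
    deriv^[n] (fun w ↦ besselGegSeries a l w z)
      = fun w ↦ (z : ℂ) ^ n * besselGegSeries (fun k ↦ a (k + n)) (l + n) w z := by
  induction n with
  | zero => simp
  | succ n ih =>
    funext w
    rw [Function.iterate_succ_apply', ih,
      ((hasDerivAt_besselGegSeries (ha.comp_add n) (by positivity) hz w).const_mul _).deriv,
      pow_succ, mul_assoc]
    push_cast
    simp only [add_assoc, add_comm 1]

lemma tsum_besselJ_mul_deriv_geg (ha : HasGeometricGrowth a) (hl : 0 < l) (hz : 0 ≤ z) (w : ℝ) :
    (2 ^ (l - 1) * Real.Gamma l : ℝ) *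
        ∑' k : ℕ, a k * ((z ^ (-l - 1) * besselJ (k + l) z * deriv (geg l k) w : ℝ) : ℂ)
      = besselGegSeries (fun k ↦ a (k + 1)) (l + 1) w z := by
  have hcoeff : IsEntireCoeff fun k ↦ a k * (besselJ (k + l) z : ℂ) :=
    ha.isEntireCoeff_mul_besselJ hl.le hz
  calc _ = (2 ^ (l - 1) * Real.Gamma l : ℝ) * ((z ^ (-l - 1) : ℝ) *
        ∑' k : ℕ, deriv (geg l k) w • (a k * (besselJ (k + l) z : ℂ))) := by
        rw [← tsum_mul_left (a := ((z ^ (-l - 1) : ℝ) : ℂ))]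
        congr 2 with k
        rw [Complex.real_smul]
        push_cast
        ring
    _ = besselGegSeries (fun k ↦ a (k + 1)) (l + 1) w z := by
        rw [tsum_deriv_geg_smul hcoeff, besselGegSeries, ← two_rpow_mul_Gamma_mul_two_mul hl.ne',
          neg_add', Complex.real_smul]
        simp only [natCast_succ_add]
        push_cast
        ring

end Derivative

/-! ### The families `A_λ`, `B_λ`, `C_λ` -/

lemma AfunU_eq_besselGegSeries (u : ℂ) {l : ℝ} (hl : l ≠ 0) (w z : ℝ) :
    AfunU u l w z = l * besselGegSeries (fun k ↦ u + (-1) ^ k) l w z := by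
  rw [AfunU, besselGegSeries_eq_tsum, Real.Gamma_add_one hl]
  push_cast
  ring

lemma BfunU_eq_besselGegSeries (u : ℂ) (l w z : ℝ) :
    BfunU u l w z = -besselGegSeries (fun k ↦ (k + l) * (u - (-1) ^ k)) l w z := by
  rw [BfunU, besselGegSeries_eq_tsum, neg_mul]

lemma CfunU_eq_AfunU_neg (u : ℂ) {l z : ℝ} (hl : 0 < l) (hz : 0 ≤ z) (w : ℝ) :
    CfunU u l w z = AfunU (-u) (l + 1) w z / (l + 1 : ℝ) := by
  have hsign (k : ℕ) : u + (-1) ^ (k + 1) = -1 * (-u + (-1) ^ k) := by ring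
  have hl' : ((l + 1 : ℝ) : ℂ) ≠ 0 := Complex.ofReal_ne_zero.2 (by positivity)
  rw [CfunU, neg_mul, tsum_besselJ_mul_deriv_geg (hasGeometricGrowth_add_neg_one_pow u) hl hz,
    AfunU_eq_besselGegSeries _ (by positivity), mul_div_cancel_left₀ _ hl']
  simp only [hsign, besselGegSeries_const_mul]
  ring

section IteratedDerivative

variable {l z : ℝ}

lemma neg_one_pow_mul_self (n : ℕ) : (-1 : ℂ) ^ n * (-1) ^ n = 1 := by
  rw [← mul_pow, neg_one_mul, neg_neg, one_pow]

lemma iterate_deriv_AfunU (u : ℂ) (hl : 0 < l) (hz : 0 < z) (n : ℕ) (w : ℝ) :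
    (l + n) * deriv^[n] (fun y ↦ AfunU u l y z) w
      = l * (-z) ^ n * AfunU ((-1) ^ n * u) (l + n) w z := by
  have hsign (k : ℕ) : u + (-1) ^ (k + n) = (-1) ^ n * ((-1) ^ n * u + (-1) ^ k) := by
    linear_combination -u * neg_one_pow_mul_self n
  have hln : l + n ≠ 0 := by positivity
  simp only [AfunU_eq_besselGegSeries _ hl.ne', AfunU_eq_besselGegSeries _ hln]
  rw [← iteratedDeriv_eq_iterate, iteratedDeriv_const_mul_field, iteratedDeriv_eq_iterate,
    iterate_deriv_besselGegSeries (hasGeometricGrowth_add_neg_one_pow u) hl hz]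
  simp only [hsign, besselGegSeries_const_mul]
  rw [neg_pow (z : ℂ)]
  push_cast
  ring

lemma iterate_deriv_BfunU (u : ℂ) (hl : 0 < l) (hz : 0 < z) (n : ℕ) (w : ℝ) :
    deriv^[n] (fun y ↦ BfunU u l y z) w = (-z) ^ n * BfunU ((-1) ^ n * u) (l + n) w z := by
  have hgrowth : HasGeometricGrowth fun k ↦ (k + (l : ℂ)) * (u - (-1) ^ k) := by
    simpa only [pow_succ, mul_neg_one, ← sub_eq_add_neg] using
      (hasGeometricGrowth_natCast_add l).mul ((hasGeometricGrowth_add_neg_one_pow u).comp_add 1)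
  have hsign (k : ℕ) : (((k + n : ℕ) : ℂ) + l) * (u - (-1) ^ (k + n))
      = (-1) ^ n * ((k + (l + n : ℝ)) * ((-1) ^ n * u - (-1) ^ k)) := by
    push_cast
    linear_combination -(k + n + l) * u * neg_one_pow_mul_self n
  simp only [BfunU_eq_besselGegSeries]
  rw [← iteratedDeriv_eq_iterate, iteratedDeriv_fun_neg, iteratedDeriv_eq_iterate,
    iterate_deriv_besselGegSeries hgrowth hl hz]
  simp only [hsign, besselGegSeries_const_mul]
  rw [neg_pow (z : ℂ)]
  ring

end IteratedDerivative

lemma sqrt_pi_div_two_mul {z : ℝ} (hz : 0 ≤ z) :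
    √(Real.pi / (2 * z)) = 2 ^ (1 / 2 - 1 : ℝ) * Real.Gamma (1 / 2) * z ^ (-(1 / 2) : ℝ) := by
  rw [Real.Gamma_one_half_eq, Real.rpow_neg hz, ← Real.sqrt_eq_rpow,
    Real.sqrt_div' _ (by positivity), Real.sqrt_mul zero_le_two,
    show (1 / 2 - 1 : ℝ) = -(1 / 2) by norm_num, Real.rpow_neg zero_le_two, ← Real.sqrt_eq_rpow]
  field_simp

lemma besselGegSeries_one_half (a : ℕ → ℂ) (w : ℝ) {z : ℝ} (hz : 0 ≤ z) :
    besselGegSeries a (1 / 2) w z = √(Real.pi / (2 * z)) *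
      ∑' k : ℕ, a k * ((besselJ (k + 1 / 2) z * geg (1 / 2) k w : ℝ) : ℂ) := by
  rw [besselGegSeries, sqrt_pi_div_two_mul hz, gegSeries]
  congr 2 with k
  rw [Complex.real_smul]
  push_cast
  ring

lemma A12_eq_AfunU (w : ℝ) {z : ℝ} (hz : 0 ≤ z) : A12 w z = AfunU (-Complex.I) (1 / 2) w z := by
  rw [A12, AfunU_eq_besselGegSeries _ (by norm_num), besselGegSeries_one_half _ _ hz]
  push_cast
  ring

lemma B12_eq_BfunU (w : ℝ) {z : ℝ} (hz : 0 ≤ z) : B12 w z = BfunU (-Complex.I) (1 / 2) w z := by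
  have hsign (k : ℕ) : ((k : ℂ) + (1 / 2 : ℝ)) * (-Complex.I - (-1) ^ k)
      = -1 * ((k + 1 / 2) * (Complex.I + (-1) ^ k)) := by
    push_cast
    ring
  rw [B12, BfunU_eq_besselGegSeries]
  simp only [hsign, besselGegSeries_const_mul]
  rw [besselGegSeries_one_half _ _ hz, neg_one_mul, neg_neg]

lemma I_pow_two_mul_add_three (n : ℕ) : Complex.I ^ (2 * n + 3) = (-1) ^ n * -Complex.I := by
  rw [pow_add, pow_mul, Complex.I_sq, Complex.I_pow_three]

section HalfInteger

variable {z : ℝ}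

lemma ofReal_rpow_neg_natCast_mul_pow (hz : 0 < z) (n : ℕ) :
    ((z ^ (-n : ℝ) : ℝ) : ℂ) * (z : ℂ) ^ n = 1 := by
  rw [Real.rpow_neg hz.le, Real.rpow_natCast]
  exact_mod_cast inv_mul_cancel₀ (pow_pos hz n).ne'

lemma AfunU_one_half_add (hz : 0 < z) (n : ℕ) (w : ℝ) :
    AfunU (Complex.I ^ (2 * n + 3)) (1 / 2 + n) w z
      = (-1) ^ n * (2 * n + 1) * (z ^ (-n : ℝ) : ℝ) * deriv^[n] (fun y ↦ A12 y z) w := by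
  have h := iterate_deriv_AfunU (-Complex.I) one_half_pos hz n w
  simp only [A12_eq_AfunU _ hz.le, I_pow_two_mul_add_three]
  set A := AfunU ((-1) ^ n * -Complex.I) (1 / 2 + n) w z
  rw [neg_pow (z : ℂ)] at h
  push_cast at h
  linear_combination -2 * (-1) ^ n * (z ^ (-n : ℝ) : ℝ) * h
    - A * (z ^ (-n : ℝ) : ℝ) * z ^ n * neg_one_pow_mul_self n
    - A * ofReal_rpow_neg_natCast_mul_pow hz n

lemma BfunU_one_half_add (hz : 0 < z) (n : ℕ) (w : ℝ) :
    BfunU (Complex.I ^ (2 * n + 3)) (1 / 2 + n) w z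
      = (-1) ^ n * (z ^ (-n : ℝ) : ℝ) * deriv^[n] (fun y ↦ B12 y z) w := by
  simp only [B12_eq_BfunU _ hz.le, I_pow_two_mul_add_three]
  rw [iterate_deriv_BfunU _ one_half_pos hz, neg_pow (z : ℂ)]
  set B := BfunU ((-1) ^ n * -Complex.I) (1 / 2 + n) w z
  linear_combination -B * (z ^ (-n : ℝ) : ℝ) * z ^ n * neg_one_pow_mul_self n
    - B * ofReal_rpow_neg_natCast_mul_pow hz n

lemma CfunU_one_half_add (hz : 0 < z) (n : ℕ) (w : ℝ) :
    CfunU (Complex.I ^ (2 * n + 3)) (1 / 2 + n) w z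
      = 2 * (-1) ^ (n + 1) * (z ^ (-(n + 1 : ℕ) : ℝ) : ℝ) *
          deriv^[n + 1] (fun y ↦ A12 y z) w := by
  have hI : -Complex.I ^ (2 * n + 3) = Complex.I ^ (2 * (n + 1) + 3) := by
    simp only [I_pow_two_mul_add_three]
    ring
  have hl : (1 / 2 + n + 1 : ℝ) = 1 / 2 + (n + 1 : ℕ) := by
    push_cast
    ring
  have hne : ((1 / 2 + (n + 1 : ℕ) : ℝ) : ℂ) ≠ 0 := Complex.ofReal_ne_zero.2 (by positivity)
  rw [CfunU_eq_AfunU_neg _ (by positivity) hz.le, hI, hl, AfunU_one_half_add hz (n + 1),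
    div_eq_iff hne]
  push_cast
  ring

end HalfInteger

theorem kernel_odd_dimension_general (m : ℕ) (hodd : Odd m) (hm : 3 ≤ m)
    (z : ℝ) (hz : 0 < z) (w : ℝ) :
    AfunU (Complex.I ^ m) ((m - 2) / 2) w z
      = (-1) ^ ((m - 3) / 2) * (m - 2) * (z ^ ((3 - m) / 2 : ℝ) : ℝ) *
          deriv^[(m - 3) / 2] (fun w' ↦ A12 w' z) w ∧
    BfunU (Complex.I ^ m) ((m - 2) / 2) w z
      = (-1) ^ ((m - 3) / 2) * (z ^ ((3 - m) / 2 : ℝ) : ℝ) *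
          deriv^[(m - 3) / 2] (fun w' ↦ B12 w' z) w ∧
    CfunU (Complex.I ^ m) ((m - 2) / 2) w z
      = 2 * (-1) ^ ((m - 1) / 2) * (z ^ ((1 - m) / 2 : ℝ) : ℝ) *
          deriv^[(m - 1) / 2] (fun w' ↦ A12 w' z) w := by
  obtain ⟨n, rfl⟩ : ∃ n, m = 2 * n + 3 := by
    obtain ⟨r, rfl⟩ := hodd
    exact ⟨r - 1, by lia⟩
  have hA : (2 * n + 3 - 3) / 2 = n := by lia
  have hC : (2 * n + 3 - 1) / 2 = n + 1 := by lia
  have hl : (((2 * n + 3 : ℕ) : ℝ) - 2) / 2 = 1 / 2 + n := by push_cast; ring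
  have hzA : (3 - ((2 * n + 3 : ℕ) : ℝ)) / 2 = -n := by push_cast; ring
  have hzC : (1 - ((2 * n + 3 : ℕ) : ℝ)) / 2 = -(n + 1 : ℕ) := by push_cast; ring
  have hm2 : ((2 * n + 3 : ℕ) : ℂ) - 2 = 2 * n + 1 := by push_cast; ring
  rw [hA, hC, hl, hzA, hzC, hm2]
  exact ⟨AfunU_one_half_add hz n w, BfunU_one_half_add hz n w, CfunU_one_half_add hz n w⟩

/-- For odd `m ≥ 3` and `λ = (m-2)/2`, the functions `A_λ, B_λ, C_λ` of the series
representation of the Clifford-Fourier kernel are obtained from `A_{1/2}` and `B_{1/2}`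
by differentiation in `w`:
`A_{(m-2)/2} = (-1)^{(m-3)/2} (m-2) z^{(3-m)/2} ∂_w^{(m-3)/2} A_{1/2}`,
`B_{(m-2)/2} = (-1)^{(m-3)/2} z^{(3-m)/2} ∂_w^{(m-3)/2} B_{1/2}`,
`C_{(m-2)/2} = 2 (-1)^{(m-1)/2} z^{(1-m)/2} ∂_w^{(m-1)/2} A_{1/2}`. -/
theorem kernel_odd_dimension (m : ℕ) (hodd : Odd m) (hm : 3 ≤ m)
    (z : ℝ) (hz : 0 < z) (w : ℝ) (hw : w ∈ Set.Ioo (-1 : ℝ) 1) :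
    AfunU (Complex.I ^ m) (((m:ℝ) - 2)/2) w z
      = (-1 : ℂ)^((m - 3)/2) * ((m : ℂ) - 2) * ((z ^ (((3:ℝ) - m)/2) : ℝ) : ℂ) *
          (deriv^[(m - 3)/2] (fun w' => A12 w' z) w) ∧
    BfunU (Complex.I ^ m) (((m:ℝ) - 2)/2) w z
      = (-1 : ℂ)^((m - 3)/2) * ((z ^ (((3:ℝ) - m)/2) : ℝ) : ℂ) *
          (deriv^[(m - 3)/2] (fun w' => B12 w' z) w) ∧
    CfunU (Complex.I ^ m) (((m:ℝ) - 2)/2) w z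
      = 2 * (-1 : ℂ)^((m - 1)/2) * ((z ^ (((1:ℝ) - m)/2) : ℝ) : ℂ) *
          (deriv^[(m - 1)/2] (fun w' => A12 w' z) w) := by
  exact kernel_odd_dimension_general m hodd hm z hz w

end CliffordFourier
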